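/- arXiv:1705.09628 — 3 statements merged into one kernel-verified Lean document; each statement's English description precedes it below -/
import Mathlib

section
/- (Local Peierls–Bogoliubov inequality.) Let ρ be a nonsingular d×d density matrix, G a Hermitian d×d matrix, and ᾱ > 0. Then there exists γ ≥ 2 such that the function Γ(α) := D(ρ_G(α), ρ) / α^γ is non-increasing on the interval (0, ᾱ]; that is, for all α₁, α₂ with 0 < α₁ ≤ α₂ ≤ ᾱ, one has D(ρ_G(α₂), ρ)/α₂^γ ≤ D(ρ_G(α₁), ρ)/α₁^γ. -/
open scoped Matrix ComplexOrder

noncomputable section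

/-- The space of `d × d` complex matrices. -/
abbrev Mat (d : ℕ) := Matrix (Fin d) (Fin d) ℂ

/-- Matrix exponential of a Hermitian matrix, via the real continuous functional calculus
(i.e. the functional calculus on the eigenvalues). -/
noncomputable def mexp {d : ℕ} (A : Mat d) : Mat d := cfc Real.exp A

/-- Matrix logarithm of a positive definite Hermitian matrix, via the real continuous
functional calculus. -/
noncomputable def mlog {d : ℕ} (A : Mat d) : Mat d := cfc Real.log A

/-- A density matrix: Hermitian, positive semidefinite, trace one. -/
def IsDensity {d : ℕ} (ρ : Mat d) : Prop := ρ.PosSemidef ∧ ρ.trace = 1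

/-- The real part of the Hilbert–Schmidt inner product `tr (Xᴴ Y)` (which is real
when `X` and `Y` are Hermitian). -/
noncomputable def hsInner {d : ℕ} (X Y : Mat d) : ℝ := (Matrix.trace (Xᴴ * Y)).re

/-- `tr (σ log σ) = ∑ᵢ λᵢ log λᵢ` over the eigenvalues of `σ` (the convention
`0 log 0 = 0` matches `Real.log 0 = 0`), via the functional calculus for `x ↦ x log x`. -/
noncomputable def trEnt {d : ℕ} (σ : Mat d) : ℝ :=
  (Matrix.trace (cfc (fun x : ℝ => x * Real.log x) σ)).re

/-- The quantum relative entropy `D(σ, ρ) = tr (σ log σ) - tr (σ log ρ)` (for `σ` a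
density matrix and `ρ` a nonsingular density matrix). -/
noncomputable def qRelEnt {d : ℕ} (σ ρ : Mat d) : ℝ :=
  trEnt σ - (Matrix.trace (σ * mlog ρ)).re

/-- The exponentiated-gradient step `ρ_G(α) = c⁻¹ exp (log ρ - α G)` where
`c = tr exp (log ρ - α G)`. -/
noncomputable def egStep {d : ℕ} (ρ G : Mat d) (α : ℝ) : Mat d :=
  (Matrix.trace (mexp (mlog ρ - α • G)))⁻¹ • mexp (mlog ρ - α • G)

lemma cfc_expand {d : ℕ} {A : Mat d} (hA : A.IsHermitian) (f : ℝ → ℝ) :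
    cfc f A = (hA.eigenvectorUnitary : Mat d) *
      Matrix.diagonal (fun i => ((f (hA.eigenvalues i) : ℝ) : ℂ)) *
      (hA.eigenvectorUnitary : Mat d)ᴴ := by
  rw [hA.cfc_eq, Matrix.IsHermitian.cfc, Unitary.conjStarAlgAut_apply]
  rfl

lemma spec_cont {d : ℕ} (A : Mat d) (f : ℝ → ℝ) : ContinuousOn f (spectrum ℝ A) :=
  A.finite_real_spectrum.continuousOn f

lemma trace_mul_cfc {d : ℕ} {A B : Mat d} (hA : A.IsHermitian) (hB : B.IsHermitian) :
    ∃ (a b : Fin d → ℝ) (w : Fin d → Fin d → ℝ), (∀ i j, 0 ≤ w i j) ∧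
      ∀ f g : ℝ → ℝ, (Matrix.trace (cfc f A * cfc g B)).re = ∑ i, ∑ j, f (a i) * g (b j) * w i j := by
  set U : Mat d := (hA.eigenvectorUnitary : Mat d)
  set V : Mat d := (hB.eigenvectorUnitary : Mat d)
  refine ⟨hA.eigenvalues, hB.eigenvalues, fun i j => Complex.normSq ((Uᴴ * V) i j),
    fun i j => Complex.normSq_nonneg _, fun f g => ?_⟩
  rw [cfc_expand hA, cfc_expand hB]
  change (Matrix.trace (U * Matrix.diagonal _ * Uᴴ * (V * Matrix.diagonal _ * Vᴴ))).re = _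
  set D := Matrix.diagonal (fun i => ((f (hA.eigenvalues i) : ℝ) : ℂ)) with hD
  set E := Matrix.diagonal (fun i => ((g (hB.eigenvalues i) : ℝ) : ℂ)) with hE
  have : Matrix.trace (U * D * Uᴴ * (V * E * Vᴴ)) = Matrix.trace (D * (Uᴴ * V) * (E * (Uᴴ * V)ᴴ)) := by
    rw [Matrix.conjTranspose_mul, Matrix.conjTranspose_conjTranspose]
    rw [show U * D * Uᴴ * (V * E * Vᴴ) = U * (D * Uᴴ * V * E * Vᴴ) by noncomm_ring]
    rw [Matrix.trace_mul_comm]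
    congr 1
    noncomm_ring
  rw [this, Matrix.trace]
  simp only [Matrix.diag_apply]
  rw [Complex.re_sum]
  refine Finset.sum_congr rfl fun i _ => ?_
  rw [Matrix.mul_apply, Complex.re_sum]
  refine Finset.sum_congr rfl fun j _ => ?_
  rw [hD, hE, Matrix.diagonal_mul, Matrix.diagonal_mul, Matrix.conjTranspose_apply]
  generalize (Uᴴ * V) i j = z
  rw [show ((f (hA.eigenvalues i) : ℝ) : ℂ) * z * (((g (hB.eigenvalues j) : ℝ) : ℂ) * star z)
    = ((f (hA.eigenvalues i) * g (hB.eigenvalues j) : ℝ) : ℂ) * (z * (starRingEnd ℂ) z) by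
      push_cast; simp only [RCLike.star_def]; ring]
  rw [Complex.mul_conj, ← Complex.ofReal_mul, Complex.ofReal_re]

/-- Klein inequality. -/
lemma klein {d : ℕ} {A B : Mat d} (hA : A.IsHermitian) (hB : B.IsHermitian) :
    (Matrix.trace (mexp A)).re + (Matrix.trace (mexp A * (B - A))).re
      ≤ (Matrix.trace (mexp B)).re := by
  obtain ⟨a, b, w, hw, h⟩ := trace_mul_cfc hA hB
  have hA' : IsSelfAdjoint A := hA
  have hB' : IsSelfAdjoint B := hB
  have e1 := h Real.exp (fun _ => 1)
  have e2 := h Real.exp id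
  have e3 := h (fun x => Real.exp x * x) (fun _ => 1)
  have e4 := h (fun _ => 1) Real.exp
  rw [cfc_const_one ℝ B, mul_one] at e1 e3
  rw [cfc_const_one ℝ A, one_mul] at e4
  rw [cfc_id ℝ B] at e2
  rw [cfc_mul Real.exp (fun x => x) A (spec_cont _ _) (spec_cont _ _), cfc_id' ℝ A] at e3
  simp only [mexp]
  rw [mul_sub, Matrix.trace_sub, Complex.sub_re, e1, e2, e3, e4, ← sub_nonneg]
  simp only [← Finset.sum_sub_distrib, ← Finset.sum_add_distrib]
  refine Finset.sum_nonneg fun i _ => Finset.sum_nonneg fun j _ => ?_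
  have := Real.add_one_le_exp (b j - a i)
  have h2 : Real.exp (b j) = Real.exp (a i) * Real.exp (b j - a i) := by
    rw [← Real.exp_add]; ring_nf
  have h3 : 0 ≤ w i j * Real.exp (a i) * (Real.exp (b j - a i) - (b j - a i + 1)) :=
    mul_nonneg (mul_nonneg (hw i j) (Real.exp_pos _).le) (by linarith)
  rw [h2]; simp only [id]; nlinarith

lemma mexp_add_const {d : ℕ} {A : Mat d} (hA : A.IsHermitian) (c : ℝ) :
    mexp (A + c • 1) = Real.exp c • mexp A := by
  have hA' : IsSelfAdjoint A := hA
  have h1 : A + c • 1 = cfc (fun x : ℝ => x + c) A := by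
    rw [cfc_add_const c (fun x : ℝ => x) A (spec_cont _ _), cfc_id' ℝ A, Algebra.algebraMap_eq_smul_one]
  unfold mexp
  rw [h1, ← cfc_comp' Real.exp (fun x => x + c) A (by fun_prop) (by fun_prop),
    ← cfc_smul (Real.exp c) Real.exp A (by fun_prop)]
  congr 1
  ext x
  rw [Real.exp_add, smul_eq_mul, mul_comm]

lemma trace_mexp {d : ℕ} (hd : 0 < d) {A : Mat d} (hA : A.IsHermitian) :
    0 < (Matrix.trace (mexp A)).re ∧
    Matrix.trace (mexp A) = (((Matrix.trace (mexp A)).re : ℝ) : ℂ) := by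
  have : Matrix.trace (mexp A) = ((∑ i, Real.exp (hA.eigenvalues i) : ℝ) : ℂ) := by
    rw [mexp, cfc_expand hA, Matrix.trace_mul_comm, ← mul_assoc, ← Matrix.star_eq_conjTranspose,
      Unitary.coe_star_mul_self, one_mul, Matrix.trace_diagonal]
    push_cast; rfl
  rw [this, Complex.ofReal_re]
  refine ⟨Finset.sum_pos (fun i _ => Real.exp_pos _) ⟨⟨0, hd⟩, Finset.mem_univ _⟩, rfl⟩

lemma mexp_eq_exp {d : ℕ} {A : Mat d} (hA : A.IsHermitian) : mexp A = NormedSpace.exp A := by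
  have hU : IsUnit (hA.eigenvectorUnitary : Mat d) := (Unitary.toUnits hA.eigenvectorUnitary).isUnit
  have hinv : (hA.eigenvectorUnitary : Mat d)⁻¹ = (hA.eigenvectorUnitary : Mat d)ᴴ := by
    apply Matrix.inv_eq_left_inv
    exact Unitary.coe_star_mul_self _
  have hA' : IsSelfAdjoint A := hA
  conv_rhs => rw [← cfc_id ℝ A, cfc_expand hA, ← hinv, Matrix.exp_conj _ _ hU, Matrix.exp_diagonal]
  rw [mexp, cfc_expand hA, hinv]
  congr 3
  ext i
  rw [Pi.coe_exp, ← Complex.exp_eq_exp_ℂ, Complex.ofReal_exp]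
  rfl

open scoped Matrix.Norms.Operator in
lemma trace_exp_analytic {d : ℕ} (A G : Mat d) :
    AnalyticOnNhd ℝ (fun α : ℝ => (Matrix.trace (NormedSpace.exp (A - α • G))).re) Set.univ := by
  intro x _
  let T : Mat d →ₗ[ℝ] ℝ := Complex.reLm ∘ₗ (Matrix.traceLinearMap (Fin d) ℝ ℂ)
  have h1 : AnalyticAt ℝ (fun α : ℝ => A - α • G) x :=
    analyticAt_const.sub (analyticAt_id.smul analyticAt_const)
  have h2 : AnalyticAt ℝ (NormedSpace.exp : Mat d → Mat d) (A - x • G) :=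
    NormedSpace.exp_analytic (𝕂 := ℝ) _
  have h3 : AnalyticAt ℝ (T.toContinuousLinearMap) (NormedSpace.exp (A - x • G)) :=
    T.toContinuousLinearMap.analyticAt _
  have h4 := h2.comp (f := fun α : ℝ => A - α • G) h1
  exact AnalyticAt.comp (f := NormedSpace.exp ∘ fun α : ℝ => A - α • G) h3 h4

lemma qRelEnt_formula {d : ℕ} (hd : 0 < d) (ρ G : Mat d) (hG : G.IsHermitian) (α : ℝ) :
    qRelEnt (egStep ρ G α) ρ =
      α * (-((Matrix.trace (mexp (mlog ρ - α • G))).re)⁻¹ *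
        (Matrix.trace (mexp (mlog ρ - α • G) * G)).re)
      - Real.log (Matrix.trace (mexp (mlog ρ - α • G))).re := by
  have hL : (mlog ρ).IsHermitian := cfc_predicate (R := ℝ) (p := IsSelfAdjoint) Real.log ρ
  have hA : (mlog ρ - α • G).IsHermitian := by
    apply hL.sub
    rw [Matrix.IsHermitian, Matrix.conjTranspose_smul, hG.eq]; simp
  obtain ⟨hZ, hZc⟩ := trace_mexp hd hA
  unfold qRelEnt egStep
  set L := mlog ρ with hLdef
  set A := L - α • G with hAdef
  set Z := (Matrix.trace (mexp A)).re with hZdef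
  have hA' : IsSelfAdjoint A := hA
  rw [hZc, ← Complex.ofReal_inv]
  have hs : ((Z⁻¹ : ℝ) : ℂ) • mexp A = Z⁻¹ • mexp A := by
    ext i j; simp
  rw [hs]
  have hσ : Z⁻¹ • mexp A = cfc (fun x : ℝ => Z⁻¹ • Real.exp x) A := by
    rw [cfc_smul Z⁻¹ Real.exp A (spec_cont _ _)]; rfl
  have hent : trEnt (Z⁻¹ • mexp A) =
      Z⁻¹ * (Matrix.trace (mexp A * A)).re - Real.log Z := by
    unfold trEnt
    rw [hσ, ← cfc_comp' (fun x : ℝ => x * Real.log x) (fun x : ℝ => Z⁻¹ • Real.exp x) A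
      ((A.finite_real_spectrum.image _).continuousOn _) (spec_cont _ _)]
    have : (fun x : ℝ => (Z⁻¹ • Real.exp x) * Real.log (Z⁻¹ • Real.exp x)) =
        fun x => Z⁻¹ • (Real.exp x * x) - (Z⁻¹ * Real.log Z) • Real.exp x := by
      ext x
      simp only [smul_eq_mul]
      rw [Real.log_mul (inv_ne_zero hZ.ne') (Real.exp_pos x).ne', Real.log_exp, Real.log_inv]
      ring
    rw [this, cfc_sub _ _ A (spec_cont _ _) (spec_cont _ _),
      cfc_smul Z⁻¹ (fun x => Real.exp x * x) A (spec_cont _ _),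
      cfc_smul (Z⁻¹ * Real.log Z) Real.exp A (spec_cont _ _),
      cfc_mul Real.exp (fun x => x) A (spec_cont _ _) (spec_cont _ _), cfc_id' ℝ A]
    change (Matrix.trace (Z⁻¹ • (mexp A * A) - (Z⁻¹ * Real.log Z) • mexp A)).re = _
    rw [Matrix.trace_sub, Matrix.trace_smul, Matrix.trace_smul, Complex.sub_re,
      Complex.smul_re, Complex.smul_re, ← hZdef]
    simp only [smul_eq_mul]
    field_simp
  rw [hent]
  have hLA : L = A + α • G := by rw [hAdef]; abel
  rw [hLA, Matrix.smul_mul, mul_add, Matrix.mul_smul, Matrix.trace_smul, Matrix.trace_add,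
    Matrix.trace_smul, Complex.smul_re, Complex.add_re, Complex.smul_re]
  simp only [smul_eq_mul]
  ring

lemma subgrad {d : ℕ} (hd : 0 < d) (L G : Mat d) (hL : L.IsHermitian) (hG : G.IsHermitian)
    (a b : ℝ) :
    Real.log (Matrix.trace (mexp (L - a • G))).re + (b - a) *
      (-((Matrix.trace (mexp (L - a • G))).re)⁻¹ * (Matrix.trace (mexp (L - a • G) * G)).re)
      ≤ Real.log (Matrix.trace (mexp (L - b • G))).re := by
  have hH : ∀ α : ℝ, (L - α • G).IsHermitian := fun α => by
    apply hL.sub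
    rw [Matrix.IsHermitian, Matrix.conjTranspose_smul, hG.eq]; simp
  obtain ⟨hZa, -⟩ := trace_mexp hd (hH a)
  obtain ⟨hZb, -⟩ := trace_mexp hd (hH b)
  set Za := (Matrix.trace (mexp (L - a • G))).re with hZadef
  set Zb := (Matrix.trace (mexp (L - b • G))).re with hZbdef
  set c := Real.log Za - Real.log Zb with hc
  have hB : (L - b • G + c • (1 : Mat d)).IsHermitian := by
    apply (hH b).add
    rw [Matrix.IsHermitian, Matrix.conjTranspose_smul]; simp
  have hk := klein (hH a) hB
  rw [mexp_add_const (hH b), Matrix.trace_smul, Complex.smul_re, ← hZadef, ← hZbdef, hc,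
    Real.exp_sub, Real.exp_log hZa, Real.exp_log hZb, ← hc, smul_eq_mul,
    div_mul_cancel₀ _ hZb.ne',
    show L - b • G + c • (1 : Mat d) - (L - a • G) = c • (1 : Mat d) - (b - a) • G by
      rw [sub_smul b a]; abel,
    mul_sub, Matrix.mul_smul, Matrix.mul_smul, mul_one, Matrix.trace_sub, Matrix.trace_smul,
    Matrix.trace_smul, Complex.sub_re, Complex.smul_re, Complex.smul_re, ← hZadef] at hk
  simp only [smul_eq_mul] at hk
  generalize (Matrix.trace (mexp (L - a • G) * G)).re = t at hk ⊢
  have : (c - (b - a) * (Za⁻¹ * t)) * Za ≤ 0 := by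
    field_simp
    linarith
  have := nonpos_of_mul_nonpos_left this hZa
  rw [hc] at this
  linarith

open Filter Topology in
lemma real_part (φ g : ℝ → ℝ) (hφ : AnalyticOnNhd ℝ φ Set.univ)
    (hsub : ∀ a b, φ a + (b - a) * g a ≤ φ b) (h0 : φ 0 = 0) (abar : ℝ) :
    ∃ γ : ℝ, 2 ≤ γ ∧
      ∀ α₁ α₂ : ℝ, 0 < α₁ → α₁ ≤ α₂ → α₂ ≤ abar →
        (α₂ * g α₂ - φ α₂) / α₂ ^ γ ≤ (α₁ * g α₁ - φ α₁) / α₁ ^ γ := by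
  have hd : ∀ a, HasDerivAt φ (g a) a := by
    intro a
    have h1 := (hφ a trivial).differentiableAt.hasDerivAt
    have h2 : HasDerivAt (fun b => φ b - (b - a) * g a) (deriv φ a - 1 * g a) a :=
      h1.sub (((hasDerivAt_id a).sub_const a).mul_const (g a))
    have h3 : IsLocalMin (fun b => φ b - (b - a) * g a) a :=
      Eventually.of_forall fun b => by
        have := hsub a b
        simp only; linarith
    have := h3.hasDerivAt_eq_zero h2
    rw [show g a = deriv φ a by linarith]
    exact h1
  have hg : AnalyticOnNhd ℝ g Set.univ := by
    have : g = deriv φ := funext fun a => (hd a).deriv.symm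
    rw [this]; exact hφ.deriv
  set D : ℝ → ℝ := fun x => x * g x - φ x with hDdef
  have hD : AnalyticOnNhd ℝ D Set.univ := (analyticOnNhd_id.mul hg).sub hφ
  have hDm : ∀ a b, 0 ≤ a → a ≤ b → D a ≤ D b := by
    intro a b ha hab
    have h1 := hsub a b
    have h2 := hsub b a
    rcases hab.eq_or_lt with rfl | hlt
    · exact le_rfl
    have h3 : g a ≤ g b := by nlinarith
    simp only [hDdef]
    nlinarith
  have hD0 : D 0 = 0 := by simp [hDdef, h0]
  change ∃ γ : ℝ, 2 ≤ γ ∧ ∀ α₁ α₂ : ℝ, 0 < α₁ → α₁ ≤ α₂ → α₂ ≤ abar →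
        D α₂ / α₂ ^ γ ≤ D α₁ / α₁ ^ γ
  by_cases hz : ∃ᶠ z in 𝓝[≠] (0 : ℝ), D z = 0
  · have hDz := hD.eqOn_zero_of_preconnected_of_frequently_eq_zero isPreconnected_univ trivial hz
    have : ∀ x, D x = 0 := fun x => hDz (Set.mem_univ x)
    exact ⟨2, le_rfl, fun a b _ _ _ => by simp [this]⟩
  have hpos : ∀ x, 0 < x → 0 < D x := by
    intro x hx
    refine lt_of_le_of_ne (hD0 ▸ hDm 0 x le_rfl hx.le) fun h => hz ?_
    have h1 : ∀ᶠ z in 𝓝[>] (0 : ℝ), D z = 0 := by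
      filter_upwards [Ioo_mem_nhdsGT hx] with z hz
      have a1 := hDm 0 z le_rfl hz.1.le
      have a2 := hDm z x hz.1.le hz.2.le
      linarith
    exact h1.frequently.filter_mono (nhdsWithin_mono _ fun y hy => ne_of_gt hy)
  have hz' : ¬ ∀ᶠ z in 𝓝 (0 : ℝ), D z = 0 := fun h =>
    hz ((hD 0 trivial).frequently_zero_iff_eventually_zero.2 h)
  obtain ⟨n, h, hh, hh0, hDh⟩ :=
    ((hD 0 trivial).exists_eventuallyEq_pow_smul_nonzero_iff).2 hz'
  simp only [sub_zero, smul_eq_mul] at hDh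
  -- the log-derivative
  have hDd : ∀ x, HasDerivAt D (deriv D x) x := fun x => (hD x trivial).differentiableAt.hasDerivAt
  have hDc : Continuous D := by
    rw [continuous_iff_continuousAt]; exact fun x => (hD x trivial).continuousAt
  have hDc' : Continuous (deriv D) := by
    rw [continuous_iff_continuousAt]; exact fun x => (hD.deriv x trivial).continuousAt
  have hev : ∀ᶠ x in 𝓝[>] (0 : ℝ), x * deriv D x / D x ≤ n + 1 := by
    have hc : ContinuousAt (fun x => x * deriv h x / h x) 0 :=
      (continuousAt_id.mul hh.deriv.continuousAt).div hh.continuousAt hh0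
    have hc1 : ∀ᶠ x in 𝓝 (0 : ℝ), x * deriv h x / h x < 1 :=
      hc.eventually_lt continuousAt_const (by simp)
    have hne : ∀ᶠ x in 𝓝 (0 : ℝ), h x ≠ 0 := hh.continuousAt.eventually_ne hh0
    have hall := hc1.and (hne.and (hDh.eventually_nhds.and hh.eventually_analyticAt))
    filter_upwards [hall.filter_mono nhdsWithin_le_nhds, self_mem_nhdsWithin] with x hx hx0
    obtain ⟨h1, h2, h3, h4⟩ := hx
    have hx0 : 0 < x := hx0
    have h5 : HasDerivAt (fun z => z ^ n * h z) (n * x ^ (n - 1) * h x + x ^ n * deriv h x) x :=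
      (hasDerivAt_pow n x).mul h4.differentiableAt.hasDerivAt
    have h6 : deriv D x = n * x ^ (n - 1) * h x + x ^ n * deriv h x :=
      (h5.congr_of_eventuallyEq h3).deriv
    have h7 : D x = x ^ n * h x := h3.self_of_nhds
    have h8 : x * deriv D x / D x = n + x * deriv h x / h x := by
      rw [h6, h7]
      rcases n with _ | n
      · simp
      · have := pow_pos hx0 n
        simp only [Nat.add_sub_cancel]
        field_simp
        ring
    rw [h8]; linarith
  obtain ⟨ε, hε, hεb⟩ := mem_nhdsGT_iff_exists_Ioo_subset.1 hev
  have hε : 0 < ε := hε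
  obtain ⟨C, hC⟩ : ∃ C, ∀ x ∈ Set.Icc ε abar, x * deriv D x / D x ≤ C := by
    have : ContinuousOn (fun x => x * deriv D x / D x) (Set.Icc ε abar) :=
      (continuous_id.mul hDc').continuousOn.div hDc.continuousOn
        fun x hx => (hpos x (hε.trans_le hx.1)).ne'
    obtain ⟨C, hC⟩ := isCompact_Icc.bddAbove_image this
    exact ⟨C, fun x hx => hC ⟨x, hx, rfl⟩⟩
  set γ := max 2 (max (n + 1 : ℝ) C) with hγ
  refine ⟨γ, le_max_left _ _, ?_⟩
  have hb : ∀ x, 0 < x → x ≤ abar → x * deriv D x ≤ γ * D x := by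
    intro x hx hxa
    rw [← div_le_iff₀ (hpos x hx)]
    rcases lt_or_ge x ε with hl | hl
    · have : x * deriv D x / D x ≤ n + 1 := hεb ⟨hx, hl⟩
      exact this.trans ((le_max_left _ _).trans (le_max_right _ _))
    · exact (hC x ⟨hl, hxa⟩).trans ((le_max_right _ _).trans (le_max_right _ _))
  have hder : ∀ x, 0 < x → HasDerivAt (fun x => D x / x ^ γ)
      ((deriv D x * x ^ γ - D x * (γ * x ^ (γ - 1))) / (x ^ γ) ^ 2) x := fun x hx =>
    (hDd x).div (Real.hasDerivAt_rpow_const (Or.inl hx.ne')) (Real.rpow_pos_of_pos hx γ).ne'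
  have hanti : AntitoneOn (fun x => D x / x ^ γ) (Set.Ioc 0 abar) := by
    refine antitoneOn_of_deriv_nonpos (convex_Ioc 0 abar)
      (fun x hx => (hder x hx.1).continuousAt.continuousWithinAt)
      (fun x hx => (hder x (interior_subset hx).1).differentiableAt.differentiableWithinAt)
      fun x hx => ?_
    have hx := interior_subset hx
    rw [(hder x hx.1).deriv]
    apply div_nonpos_of_nonpos_of_nonneg _ (sq_nonneg _)
    have h1 : x ^ γ = x ^ (γ - 1) * x := by
      rw [← Real.rpow_add_one hx.1.ne', sub_add_cancel]
    have h2 := Real.rpow_pos_of_pos hx.1 (γ - 1)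
    have h3 := hb x hx.1 hx.2
    rw [h1]
    nlinarith
  intro a b ha hab hba
  exact hanti ⟨ha, hab.trans hba⟩ ⟨ha.trans_le hab, hba⟩ hab

/-- local Peierls–Bogoliubov inequality: there is some `γ ≥ 2` such that
`α ↦ D(ρ_G(α), ρ) / α ^ γ` is non-increasing on `(0, ᾱ]`. -/
theorem stmt_10 {d : ℕ} (hd : 0 < d) (ρ G : Mat d) (hρ : ρ.PosDef) (hρ1 : ρ.trace = 1)
    (hG : G.IsHermitian) (abar : ℝ) (habar : 0 < abar) :
    ∃ γ : ℝ, 2 ≤ γ ∧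
      ∀ α₁ α₂ : ℝ, 0 < α₁ → α₁ ≤ α₂ → α₂ ≤ abar →
        qRelEnt (egStep ρ G α₂) ρ / α₂ ^ γ ≤ qRelEnt (egStep ρ G α₁) ρ / α₁ ^ γ := by
  have hL : (mlog ρ).IsHermitian := cfc_predicate (R := ℝ) (p := IsSelfAdjoint) Real.log ρ
  have hH : ∀ α : ℝ, (mlog ρ - α • G).IsHermitian := fun α => by
    apply hL.sub
    rw [Matrix.IsHermitian, Matrix.conjTranspose_smul, hG.eq]; simp
  have hρ' : IsSelfAdjoint ρ := hρ.1
  have hexp : mexp (mlog ρ) = ρ := by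
    unfold mexp mlog
    rw [← cfc_comp' Real.exp Real.log ρ (by fun_prop) (spec_cont _ _)]
    conv_rhs => rw [← cfc_id' ℝ ρ]
    refine cfc_congr fun x hx => ?_
    rw [hρ.1.spectrum_real_eq_range_eigenvalues] at hx
    obtain ⟨i, rfl⟩ := hx
    exact Real.exp_log (hρ.eigenvalues_pos i)
  obtain ⟨γ, h2, h⟩ := real_part (fun α => Real.log (Matrix.trace (mexp (mlog ρ - α • G))).re)
    (fun α => -((Matrix.trace (mexp (mlog ρ - α • G))).re)⁻¹ *
        (Matrix.trace (mexp (mlog ρ - α • G) * G)).re)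
    (by
      intro x hx
      have := trace_exp_analytic (mlog ρ) G x hx
      simp only [← mexp_eq_exp (hH _)] at this
      exact this.log (trace_mexp hd (hH x)).1)
    (fun a b => subgrad hd _ G hL hG a b)
    (by simp [hexp, hρ1]) abar
  refine ⟨γ, h2, fun a b ha hab hb => ?_⟩
  rw [qRelEnt_formula hd ρ G hG, qRelEnt_formula hd ρ G hG]
  exact h a b ha hab hb

end
end

section
/- Let U be an open set of d×d complex matrices, let f : U → ℝ be convex (on a convex neighborhood of each of its points) and differentiable with Hermitian gradient f', let ρ ∈ U be a nonsingular density matrix, and suppose f' is Lipschitz continuous (with respect to the Frobenius norm) on some neighborhood of ρ contained in U. Then for every τ ∈ (0,1) there exists α̃ > 0 such that for all α ∈ (0, α̃), the matrix ρ(α) := ρ_{f'(ρ)}(α) lies in U and satisfies the Armijo condition f(ρ(α)) ≤ f(ρ) + τ · Re⟨f'(ρ), ρ(α) − ρ⟩. -/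
open scoped Matrix ComplexOrder

noncomputable section

attribute [local instance] Matrix.frobeniusNormedAddCommGroup Matrix.frobeniusNormedSpace

/-- `f` is (Fréchet) differentiable at `x` with gradient `g`, with respect to the real
inner product `Re tr (Xᴴ Y)`: the derivative is `V ↦ Re tr (gᴴ V)`. -/
def HasMatGradientAt {d : ℕ} (f : Mat d → ℝ) (g : Mat d) (x : Mat d) : Prop :=
  ∃ L : Mat d →L[ℝ] ℝ, HasFDerivAt f L x ∧ ∀ V : Mat d, L V = (Matrix.trace (gᴴ * V)).re

theorem hs_sum {d : ℕ} (X Y : Mat d) :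
    hsInner X Y = ∑ i, ∑ j, (star (X i j) * Y i j).re := by
  unfold hsInner
  rw [Matrix.trace]
  simp only [Matrix.diag_apply, Matrix.mul_apply, Matrix.conjTranspose_apply, Complex.re_sum]
  rw [Finset.sum_comm]

theorem hs_norm {d : ℕ} (X : Mat d) : ‖X‖ ^ 2 = ∑ i, ∑ j, ‖X i j‖ ^ 2 := by
  rw [Matrix.frobenius_norm_def, ← Real.sqrt_eq_rpow, Real.sq_sqrt]
  · simp
  · positivity

theorem hs_self {d : ℕ} (X : Mat d) : hsInner X X = ‖X‖ ^ 2 := by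
  rw [hs_sum, hs_norm]
  refine Finset.sum_congr rfl fun i _ => Finset.sum_congr rfl fun j _ => ?_
  rw [← Complex.normSq_eq_norm_sq, Complex.normSq_apply]
  simp

theorem hs_add_left {d : ℕ} (X Y Z : Mat d) :
    hsInner (X + Y) Z = hsInner X Z + hsInner Y Z := by
  simp [hsInner, Matrix.add_mul]

theorem hs_cs {d : ℕ} (X Y : Mat d) : hsInner X Y ≤ ‖X‖ * ‖Y‖ := by
  have h1 : hsInner X Y ≤ ∑ p : Fin d × Fin d, ‖X p.1 p.2‖ * ‖Y p.1 p.2‖ := by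
    rw [hs_sum, Fintype.sum_prod_type]
    refine Finset.sum_le_sum fun i _ => Finset.sum_le_sum fun j _ => ?_
    refine (Complex.re_le_norm _).trans ?_
    rw [norm_mul, norm_star]
  have h2 := Finset.sum_mul_sq_le_sq_mul_sq Finset.univ
    (fun p : Fin d × Fin d => ‖X p.1 p.2‖) (fun p => ‖Y p.1 p.2‖)
  have hX := hs_norm X
  have hY := hs_norm Y
  rw [← Fintype.sum_prod_type (f := fun p : Fin d × Fin d => ‖X p.1 p.2‖ ^ 2)] at hX
  rw [← Fintype.sum_prod_type (f := fun p : Fin d × Fin d => ‖Y p.1 p.2‖ ^ 2)] at hY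
  rw [← hX, ← hY, ← mul_pow] at h2
  exact h1.trans (abs_le_of_sq_le_sq' h2 (by positivity)).2

theorem cfc_form {d : ℕ} {A : Mat d} (hA : A.IsHermitian) (p : ℝ → ℝ) :
    cfc p A = (hA.eigenvectorUnitary : Mat d) *
      Matrix.diagonal (fun i => ((p (hA.eigenvalues i) : ℝ) : ℂ)) *
      star (hA.eigenvectorUnitary : Mat d) := by
  rw [hA.cfc_eq, Matrix.IsHermitian.cfc, Unitary.conjStarAlgAut_apply]
  rfl

theorem cfc_trace {d : ℕ} {A : Mat d} (hA : A.IsHermitian) (p : ℝ → ℝ) :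
    (cfc p A).trace = ((∑ i, p (hA.eigenvalues i) : ℝ) : ℂ) := by
  rw [cfc_form hA, Matrix.trace_mul_cycle, Unitary.coe_star_mul_self, one_mul,
    Matrix.trace_diagonal]
  simp

theorem hs_conj {d : ℕ} (U W X Y : Mat d) (hU : U * star U = 1) (hW : W * star W = 1) :
    hsInner (star U * X * W) (star U * Y * W) = hsInner X Y := by
  unfold hsInner
  simp only [← Matrix.star_eq_conjTranspose, star_mul, star_star]
  have : star W * (star X * U) * (star U * Y * W) = star W * (star X * (U * star U) * Y) * W := by
    simp only [mul_assoc]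
  rw [this, hU, mul_one, Matrix.trace_mul_cycle, hW, one_mul]

theorem hs_cfc {d : ℕ} {A B : Mat d} (hA : A.IsHermitian) (hB : B.IsHermitian)
    (p q r s : ℝ → ℝ) :
    hsInner (cfc p A - cfc r B) (cfc q A - cfc s B) =
      ∑ i, ∑ j, (p (hA.eigenvalues i) - r (hB.eigenvalues j)) *
        (q (hA.eigenvalues i) - s (hB.eigenvalues j)) *
        ‖(star (hA.eigenvectorUnitary : Mat d) * (hB.eigenvectorUnitary : Mat d)) i j‖ ^ 2 := by
  have hM : ∀ (p r : ℝ → ℝ) i j, (star (hA.eigenvectorUnitary : Mat d) * (cfc p A - cfc r B) *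
      (hB.eigenvectorUnitary : Mat d)) i j =
      ((p (hA.eigenvalues i) - r (hB.eigenvalues j) : ℝ) : ℂ) *
      (star (hA.eigenvectorUnitary : Mat d) * (hB.eigenvectorUnitary : Mat d)) i j := by
    intro p r i j
    have hUU := Unitary.coe_star_mul_self hA.eigenvectorUnitary
    have hWW := Unitary.coe_star_mul_self hB.eigenvectorUnitary
    rw [cfc_form hA, cfc_form hB]
    set U := (hA.eigenvectorUnitary : Mat d)
    set W := (hB.eigenvectorUnitary : Mat d)
    set D := Matrix.diagonal (fun i => ((p (hA.eigenvalues i) : ℝ) : ℂ)) with hD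
    set E := Matrix.diagonal (fun i => ((r (hB.eigenvalues i) : ℝ) : ℂ)) with hE
    have : star U * (U * D * star U - W * E * star W) * W = D * (star U * W) - (star U * W) * E := by
      calc _ = (star U * U) * (D * (star U * W)) - (star U * W) * E * (star W * W) := by
            noncomm_ring
        _ = _ := by rw [hUU, hWW, one_mul, mul_one]
    rw [this, Matrix.sub_apply, hD, hE, Matrix.diagonal_mul, Matrix.mul_diagonal]
    push_cast
    ring
  rw [← hs_conj (hA.eigenvectorUnitary : Mat d) (hB.eigenvectorUnitary : Mat d) _ _
    (Unitary.coe_mul_star_self _) (Unitary.coe_mul_star_self _), hs_sum]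
  refine Finset.sum_congr rfl fun i _ => Finset.sum_congr rfl fun j _ => ?_
  rw [hM, hM, ← Complex.normSq_eq_norm_sq, Complex.normSq_apply]
  generalize (star (hA.eigenvectorUnitary : Mat d) * (hB.eigenvectorUnitary : Mat d)) i j = z
  simp
  ring

theorem log_mono_aux {x y : ℝ} (hx : 0 < x) (hy : 0 < y) (hx1 : x ≤ 1) (hy1 : y ≤ 1) :
    (x - y) * (x - y) ≤ (x - y) * (Real.log x - Real.log y) := by
  have key : ∀ {x y : ℝ}, 0 < x → 0 < y → x ≤ 1 → y ≤ x → x - y ≤ Real.log x - Real.log y := by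
    intro x y hx hy hx1 hyx
    have h := Real.log_le_sub_one_of_pos (div_pos hy hx)
    rw [Real.log_div hy.ne' hx.ne'] at h
    have h2 : x - y ≤ 1 - y / x := by
      rw [← sub_nonneg]
      have : 1 - y / x - (x - y) = (x - y) * (1 - x) / x := by field_simp
      rw [this]
      exact div_nonneg (mul_nonneg (by linarith) (by linarith)) hx.le
    linarith
  rcases le_total y x with h | h
  · exact mul_le_mul_of_nonneg_left (key hx hy hx1 h) (by linarith)
  · have := key hy hx hy1 h
    nlinarith

theorem eg_key {d : ℕ} (hd : 0 < d) (ρ G : Mat d) (hρ : ρ.PosDef) (hρ1 : ρ.trace = 1)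
    (hG : G.IsHermitian) (α : ℝ) :
    ‖egStep ρ G α - ρ‖ ^ 2 ≤ -(α * hsInner G (egStep ρ G α - ρ)) := by
  have hA := hρ.isHermitian
  have hL : (mlog ρ).IsHermitian := cfc_predicate (p := IsSelfAdjoint) Real.log ρ
  have hB : (mlog ρ - α • G).IsHermitian := by
    refine hL.sub ?_
    rw [Matrix.IsHermitian, Matrix.conjTranspose_smul, hG.eq]; simp
  set B := mlog ρ - α • G with hBdef
  have : Nonempty (Fin d) := ⟨⟨0, hd⟩⟩
  set c : ℝ := ∑ i, Real.exp (hB.eigenvalues i) with hc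
  have hcpos : 0 < c := Finset.sum_pos (fun i _ => Real.exp_pos _) Finset.univ_nonempty
  have htr : (mexp B).trace = (c : ℂ) := cfc_trace hB _
  have hr : egStep ρ G α = cfc (fun x => c⁻¹ * Real.exp x) B := by
    unfold egStep
    rw [← hBdef, htr, cfc_const_mul c⁻¹ Real.exp B (by fun_prop), ← Complex.ofReal_inv]
    unfold mexp
    ext i j; simp
  have hs : cfc (fun x => x - Real.log c) B = B - (Real.log c) • (1 : Mat d) := by
    rw [cfc_sub (fun x => x) (fun _ => Real.log c) B (by fun_prop) (by fun_prop),
      cfc_id' ℝ B hB.isSelfAdjoint, cfc_const _ _ hB.isSelfAdjoint, Algebra.algebraMap_eq_smul_one]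
  have hp : cfc (fun x => x) ρ = ρ := cfc_id' ℝ ρ hA.isSelfAdjoint
  have htr1 : (egStep ρ G α).trace = 1 := by
    unfold egStep
    rw [← hBdef, Matrix.trace_smul, htr, smul_eq_mul, inv_mul_cancel₀]
    exact_mod_cast hcpos.ne'
  have e1 := hs_cfc hA hB (fun x => x) (fun x => x) (fun x => c⁻¹ * Real.exp x)
    (fun x => c⁻¹ * Real.exp x)
  have e2 := hs_cfc hA hB (fun x => x) Real.log (fun x => c⁻¹ * Real.exp x)
    (fun x => x - Real.log c)
  rw [hp, ← hr, hs_self, norm_sub_rev] at e1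
  have hdiff : cfc Real.log ρ - (B - (Real.log c) • (1 : Mat d)) =
      α • G + (Real.log c) • (1 : Mat d) := by
    rw [hBdef]; unfold mlog; abel
  rw [hp, ← hr, hs, hdiff] at e2
  have hle : ‖egStep ρ G α - ρ‖ ^ 2 ≤
      hsInner (ρ - egStep ρ G α) (α • G + (Real.log c) • (1 : Mat d)) := by
    rw [e1, e2]
    refine Finset.sum_le_sum fun i _ => Finset.sum_le_sum fun j _ => ?_
    refine mul_le_mul_of_nonneg_right ?_ (by positivity)
    have h := log_mono_aux (x := hA.eigenvalues i) (y := c⁻¹ * Real.exp (hB.eigenvalues j))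
      (hρ.eigenvalues_pos i) (by positivity) ?_ ?_
    · rwa [Real.log_mul (by positivity) (Real.exp_pos _).ne', Real.log_inv, Real.log_exp,
        neg_add_eq_sub] at h
    · have ht := hA.trace_eq_sum_eigenvalues
      rw [hρ1] at ht
      have ht' : ∑ i, hA.eigenvalues i = 1 := by
        apply Complex.ofReal_injective
        push_cast
        exact ht.symm
      rw [← ht']
      exact Finset.single_le_sum (f := hA.eigenvalues)
        (fun k _ => (hρ.eigenvalues_pos k).le) (Finset.mem_univ i)
    · rw [inv_mul_le_iff₀ hcpos, mul_one]
      exact Finset.single_le_sum (f := fun j => Real.exp (hB.eigenvalues j))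
        (fun k _ => (Real.exp_pos _).le) (Finset.mem_univ j)
  refine hle.trans (le_of_eq ?_)
  have hEH : (egStep ρ G α).IsHermitian := by
    rw [hr]; exact cfc_predicate (p := IsSelfAdjoint) _ B
  unfold hsInner
  rw [Matrix.conjTranspose_sub, hEH.eq, hA.eq, hG.eq, mul_add, Matrix.trace_add, mul_smul_comm,
    mul_smul_comm, mul_one, Matrix.trace_smul, Matrix.trace_smul, Matrix.trace_sub, htr1, hρ1,
    Matrix.trace_mul_comm, ← neg_sub (egStep ρ G α) ρ, mul_neg, Matrix.trace_neg]
  simp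

/-- the Armijo condition is satisfied by all sufficiently small step
sizes, for `f` locally convex with locally Lipschitz Hermitian gradient. -/
theorem stmt_11 {d : ℕ} (hd : 0 < d) (U : Set (Mat d)) (hUopen : IsOpen U)
    (f : Mat d → ℝ) (f' : Mat d → Mat d)
    (hlocconv : ∀ x ∈ U, ∃ V : Set (Mat d),
      V ∈ nhds x ∧ V ⊆ U ∧ Convex ℝ V ∧ ConvexOn ℝ V f)
    (hgrad : ∀ x ∈ U, HasMatGradientAt f (f' x) x)
    (hherm : ∀ x ∈ U, (f' x).IsHermitian)
    (ρ : Mat d) (hρU : ρ ∈ U) (hρ : ρ.PosDef) (hρ1 : ρ.trace = 1)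
    (hLip : ∃ V ∈ nhds ρ, V ⊆ U ∧
      ∃ L : ℝ, ∀ x ∈ V, ∀ y ∈ V, ‖f' x - f' y‖ ≤ L * ‖x - y‖) :
    ∀ τ ∈ Set.Ioo (0:ℝ) 1, ∃ αtil > (0:ℝ), ∀ α ∈ Set.Ioo (0:ℝ) αtil,
      egStep ρ (f' ρ) α ∈ U ∧
        f (egStep ρ (f' ρ) α) ≤ f ρ + τ * hsInner (f' ρ) (egStep ρ (f' ρ) α - ρ) := by
  rintro τ ⟨hτ0, hτ1⟩
  obtain ⟨V, hV, hVU, L, hL⟩ := hLip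
  obtain ⟨r, hr, hball⟩ := Metric.mem_nhds_iff.1 hV
  set G := f' ρ with hG
  have hGh : G.IsHermitian := hherm ρ hρU
  refine ⟨min (r / (‖G‖ + 1)) ((1 - τ) / (|L| + 1)), ?_, ?_⟩
  · have : 0 < 1 - τ := by linarith
    exact lt_min (by positivity) (by positivity)
  rintro α ⟨hα0, hα⟩
  have hα1 := hα.trans_le (min_le_left _ _)
  have hα2 := hα.trans_le (min_le_right _ _)
  rw [lt_div_iff₀ (by positivity)] at hα1 hα2
  have hkey := eg_key hd ρ G hρ hρ1 hGh α
  set y := egStep ρ G α with hy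
  have hcs : -hsInner G (y - ρ) ≤ ‖G‖ * ‖y - ρ‖ := by
    have := hs_cs (-G) (y - ρ)
    rw [norm_neg] at this
    simpa [hsInner] using this
  have hn : ‖y - ρ‖ ≤ α * ‖G‖ := by
    by_contra! h
    have h0 : 0 < ‖y - ρ‖ := lt_of_le_of_lt (by positivity) h
    nlinarith [mul_le_mul_of_nonneg_left hcs hα0.le]
  have hyb : y ∈ Metric.ball ρ r := by
    rw [mem_ball_iff_norm]; nlinarith
  refine ⟨hVU (hball hyb), ?_⟩
  have hex : ∀ x, ∃ l : Mat d →L[ℝ] ℝ, x ∈ Metric.ball ρ r →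
      HasFDerivAt f l x ∧ ∀ V : Mat d, l V = hsInner (f' x) V := by
    intro x
    by_cases hx : x ∈ Metric.ball ρ r
    · obtain ⟨l, hl⟩ := hgrad x (hVU (hball hx))
      exact ⟨l, fun _ => hl⟩
    · exact ⟨0, fun h => absurd h hx⟩
  choose l hl using hex
  have hρb : ρ ∈ Metric.ball ρ r := Metric.mem_ball_self hr
  obtain ⟨z, hz, hfz⟩ := domain_mvt (f := f) (f' := l)
    (fun x hx => (hl x hx).1.hasFDerivWithinAt) (convex_ball ρ r) hρb hyb
  have hzb : z ∈ Metric.ball ρ r := (convex_ball ρ r).segment_subset hρb hyb hz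
  replace hfz : f y - f ρ = hsInner (f' z) (y - ρ) := hfz.trans ((hl z hzb).2 (y - ρ))
  have hzn : ‖z - ρ‖ ≤ ‖y - ρ‖ := by
    obtain ⟨t, ⟨ht0, ht1⟩, rfl⟩ := (segment_eq_image' ℝ ρ y) ▸ hz
    rw [add_sub_cancel_left, norm_smul, Real.norm_eq_abs, abs_of_nonneg ht0]
    nlinarith [norm_nonneg (y - ρ)]
  have hsplit : hsInner (f' z) (y - ρ) = hsInner (f' z - G) (y - ρ) + hsInner G (y - ρ) := by
    rw [← hs_add_left, sub_add_cancel]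
  have hc1 := hs_cs (f' z - G) (y - ρ)
  have hc2 : ‖f' z - G‖ ≤ |L| * ‖y - ρ‖ :=
    (hL z (hball hzb) ρ (hball hρb)).trans
      (mul_le_mul (le_abs_self L) hzn (norm_nonneg _) (abs_nonneg _))
  have hc3 : hsInner (f' z - G) (y - ρ) ≤ |L| * ‖y - ρ‖ ^ 2 := by
    nlinarith [norm_nonneg (y - ρ)]
  have hneg : 0 ≤ -hsInner G (y - ρ) := by
    by_contra! h
    nlinarith [sq_nonneg ‖y - ρ‖]
  have hc4 : |L| * ‖y - ρ‖ ^ 2 ≤ |L| * (-(α * hsInner G (y - ρ))) :=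
    mul_le_mul_of_nonneg_left hkey (abs_nonneg _)
  have hc5 : (α * |L|) * (-hsInner G (y - ρ)) ≤ (1 - τ) * (-hsInner G (y - ρ)) :=
    mul_le_mul_of_nonneg_right (by linarith) hneg
  nlinarith

end
end

section
/- Let U be an open convex set of d×d complex matrices containing the set D of density matrices, and let f : U → ℝ be convex and differentiable with Hermitian gradient f', where f' is locally Lipschitz on U. Fix parameters α > 0, r ∈ (0,1), τ ∈ (0,1), and let (ρ_k) in D and (α_k) be generated by the exponentiated gradient method with Armijo line search. Suppose a subsequence (ρ_{k_j}) converges to some ρ̄ ∈ D. Then there exists a constant β > 0 such that D(ρ_{k_j}(β), ρ_{k_j}) → 0 as j → ∞, where ρ_{k_j}(β) := ρ_{f'(ρ_{k_j})}(β). -/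
open scoped Matrix ComplexOrder

noncomputable section

attribute [local instance] Matrix.frobeniusNormedAddCommGroup Matrix.frobeniusNormedSpace

/-- The sequences `(ρ_k)` and `(α_k)` are generated by the exponentiated gradient method
with Armijo line search with parameters `α > 0`, `r ∈ (0,1)`, `τ ∈ (0,1)`: the initial
iterate is nonsingular, `ρ_{k+1} = ρ_k(α_k)`, each `α_k = α rᵐ` for some natural `m`, the
Armijo condition holds at `α_k`, and either `m = 0` or the Armijo condition fails at
`α_k / r`. -/
def IsEGArmijo {d : ℕ} (f : Mat d → ℝ) (f' : Mat d → Mat d) (α r τ : ℝ)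
    (ρseq : ℕ → Mat d) (αseq : ℕ → ℝ) : Prop :=
  (ρseq 0).PosDef ∧
  (∀ k, ρseq (k + 1) = egStep (ρseq k) (f' (ρseq k)) (αseq k)) ∧
  (∀ k, ∃ m : ℕ, αseq k = α * r ^ m ∧
    f (ρseq (k + 1)) ≤ f (ρseq k) + τ * hsInner (f' (ρseq k)) (ρseq (k + 1) - ρseq k) ∧
    (m = 0 ∨
      f (egStep (ρseq k) (f' (ρseq k)) (αseq k / r)) >
        f (ρseq k) +
          τ * hsInner (f' (ρseq k)) (egStep (ρseq k) (f' (ρseq k)) (αseq k / r) - ρseq k)))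


namespace EGAux

variable {d : ℕ}

lemma contSpec (g : ℝ → ℝ) (A : Mat d) : ContinuousOn g (spectrum ℝ A) :=
  (Matrix.finite_real_spectrum (A := A)).continuousOn g

lemma cfcId (A : Mat d) (h : A.IsHermitian) : cfc (fun x : ℝ => x) A = A := by
  have h' : IsSelfAdjoint A := h
  exact cfc_id' ℝ A h'

lemma cfcOne (A : Mat d) (h : A.IsHermitian) : cfc (fun _ : ℝ => (1:ℝ)) A = 1 := by
  have h' : IsSelfAdjoint A := h
  exact cfc_const_one ℝ A h'

lemma cfcConst (c : ℝ) (A : Mat d) (h : A.IsHermitian) :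
    cfc (fun _ : ℝ => c) A = algebraMap ℝ (Mat d) c := by
  have h' : IsSelfAdjoint A := h
  exact cfc_const c A h'

lemma cfcComp (g k : ℝ → ℝ) (A : Mat d) (h : A.IsHermitian) :
    cfc g (cfc k A) = cfc (fun x => g (k x)) A := by
  have h' : IsSelfAdjoint A := h
  exact (cfc_comp' g k A (((Matrix.finite_real_spectrum (A := A)).image _).continuousOn _)
    (contSpec _ _) h').symm

lemma cfcSpec (g : ℝ → ℝ) (A : Mat d) (h : A.IsHermitian) :
    spectrum ℝ (cfc g A) = g '' spectrum ℝ A := by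
  have h' : IsSelfAdjoint A := h
  exact cfc_map_spectrum g A h' (contSpec _ _)

lemma cfc_herm (g : ℝ → ℝ) (A : Mat d) : (cfc g A).IsHermitian :=
  (cfc_predicate g A : IsSelfAdjoint (cfc g A))

lemma trace_cfc_mul {A B : Mat d} (hA : A.IsHermitian) (hB : B.IsHermitian) :
    ∃ w : Fin d → Fin d → ℝ, (∀ i j, 0 ≤ w i j) ∧ ∀ g h : ℝ → ℝ,
      (Matrix.trace (cfc g A * cfc h B)).re =
        ∑ i, ∑ j, w i j * (g (hA.eigenvalues i) * h (hB.eigenvalues j)) := by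
  set Q : Mat d := star (hA.eigenvectorUnitary : Mat d) * (hB.eigenvectorUnitary : Mat d) with hQ
  refine ⟨fun i j => Complex.normSq (Q i j), fun i j => Complex.normSq_nonneg _, ?_⟩
  intro g h
  rw [hA.cfc_eq, hB.cfc_eq, Matrix.IsHermitian.cfc, Matrix.IsHermitian.cfc,
    Unitary.conjStarAlgAut_apply, Unitary.conjStarAlgAut_apply]
  have e : ∀ (P S D E : Mat d), Matrix.trace (P * D * star P * (S * E * star S)) =
      Matrix.trace (D * (star P * S) * E * star (star P * S)) := by
    intro P S D E
    rw [star_mul, star_star]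
    simp only [Matrix.mul_assoc]
    rw [Matrix.trace_mul_comm]
    simp only [Matrix.mul_assoc]
  rw [e, ← hQ, Matrix.trace, Complex.re_sum]
  refine Finset.sum_congr rfl fun i _ => ?_
  rw [Matrix.diag_apply, Matrix.mul_apply, Complex.re_sum]
  refine Finset.sum_congr rfl fun j _ => ?_
  rw [Matrix.mul_diagonal, Matrix.diagonal_mul, Matrix.star_apply]
  simp [Complex.normSq_apply]
  ring

lemma hsInner_self (X : Mat d) : hsInner X X = ‖X‖ ^ 2 := by
  rw [Matrix.frobenius_norm_def, ← Real.sqrt_eq_rpow, Real.sq_sqrt (by positivity)]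
  simp only [hsInner, Matrix.trace, Matrix.diag_apply, Matrix.mul_apply, Complex.re_sum,
    Matrix.conjTranspose_apply]
  rw [Finset.sum_comm]
  refine Finset.sum_congr rfl fun i _ => Finset.sum_congr rfl fun j _ => ?_
  rw [Real.rpow_two, Complex.sq_norm, Complex.normSq_apply]
  simp

lemma hsInner_le (X Y : Mat d) : hsInner X Y ≤ ‖X‖ * ‖Y‖ := by
  have h : ∀ t : ℝ, 0 ≤ ‖Y‖ ^ 2 * (t * t) + (-2 * hsInner X Y) * t + ‖X‖ ^ 2 := by
    intro t
    have h1 : 0 ≤ hsInner (X - t • Y) (X - t • Y) := by rw [hsInner_self]; positivity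
    have h2 : hsInner Y X = hsInner X Y := by
      unfold hsInner
      have : (Xᴴ * Y).trace = star ((Yᴴ * X).trace) := by
        rw [← Matrix.trace_conjTranspose]
        simp
      rw [this]
      simp
    have h3 : hsInner (X - t • Y) (X - t • Y) =
        hsInner X X - t * hsInner X Y - t * hsInner Y X + t * t * hsInner Y Y := by
      simp [hsInner, Matrix.conjTranspose_sub, Matrix.sub_mul, Matrix.mul_sub, Matrix.trace_sub,
        Matrix.trace_smul]
      ring
    rw [h3, h2, hsInner_self, hsInner_self] at h1
    linarith
  have := discrim_le_zero h
  rw [discrim] at this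
  refine le_of_sq_le_sq ?_ (by positivity)
  nlinarith

lemma pos_eig {ρ : Mat d} (h : ρ.PosDef) (i) : 0 < h.1.eigenvalues i := h.eigenvalues_pos i

lemma eig_le_one {ρ : Mat d} (h : ρ.PosDef) (ht : ρ.trace = 1) (i) : h.1.eigenvalues i ≤ 1 := by
  have h1 := h.1.trace_eq_sum_eigenvalues
  rw [ht] at h1
  have h2 : (1:ℝ) = ∑ i, h.1.eigenvalues i := by
    apply Complex.ofReal_injective
    simpa using h1
  rw [h2]
  exact Finset.single_le_sum (fun j _ => (pos_eig h j).le) (Finset.mem_univ i)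

lemma trEnt_eq {σ : Mat d} (h : σ.IsHermitian) :
    trEnt σ = (Matrix.trace (σ * mlog σ)).re := by
  unfold trEnt mlog
  rw [cfc_mul (fun x : ℝ => x) Real.log σ (contSpec _ _) (contSpec _ _), cfcId σ h]

lemma qRelEnt_self {σ : Mat d} (h : σ.IsHermitian) : qRelEnt σ σ = 0 := by
  rw [qRelEnt, trEnt_eq h, sub_self]

lemma klein {σ ρ : Mat d} (hσ : σ.PosDef) (hρ : ρ.PosDef) (h1 : σ.trace = 1)
    (h2 : ρ.trace = 1) : 0 ≤ qRelEnt σ ρ := by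
  obtain ⟨w, hw, H⟩ := trace_cfc_mul hσ.1 hρ.1
  have e1 := H (fun x => x * Real.log x) (fun _ => 1)
  have e2 := H (fun x => x) Real.log
  have e3 := H (fun x => x) (fun _ => 1)
  have e4 := H (fun _ => 1) (fun x => x)
  rw [cfcOne ρ hρ.1, mul_one] at e1 e3
  rw [cfcId σ hσ.1] at e2 e3
  rw [cfcOne σ hσ.1, cfcId ρ hρ.1, one_mul] at e4
  rw [h1] at e3
  rw [h2] at e4
  have e5 : qRelEnt σ ρ = ∑ i, ∑ j, w i j * (hσ.1.eigenvalues i * Real.log (hσ.1.eigenvalues i)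
      - hσ.1.eigenvalues i * Real.log (hρ.1.eigenvalues j)
      - hσ.1.eigenvalues i + hρ.1.eigenvalues j) := by
    have : qRelEnt σ ρ = trEnt σ - (Matrix.trace (σ * mlog ρ)).re - (1:ℂ).re + (1:ℂ).re := by
      rw [qRelEnt]; ring
    rw [this]
    nth_rewrite 1 [e3]
    rw [e4, trEnt, e1, mlog, e2]
    simp only [← Finset.sum_sub_distrib, ← Finset.sum_add_distrib]
    refine Finset.sum_congr rfl fun i _ => Finset.sum_congr rfl fun j _ => ?_
    ring
  rw [e5]
  refine Finset.sum_nonneg fun i _ => Finset.sum_nonneg fun j _ => mul_nonneg (hw i j) ?_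
  have ha := pos_eig hσ i
  have hb := pos_eig hρ j
  set a := hσ.1.eigenvalues i
  set b := hρ.1.eigenvalues j
  have := Real.log_le_sub_one_of_pos (div_pos hb ha)
  rw [Real.log_div hb.ne' ha.ne'] at this
  have h3 := mul_le_mul_of_nonneg_left this ha.le
  have h4 : a * (b / a - 1) = b - a := by field_simp
  rw [h4] at h3
  linarith

lemma log_sub_aux {a b : ℝ} (ha : 0 < a) (hb : 0 < b) (ha1 : a ≤ 1) (hab : b ≤ a) :
    a - b ≤ Real.log a - Real.log b := by
  have := Real.log_le_sub_one_of_pos (div_pos hb ha)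
  rw [Real.log_div hb.ne' ha.ne'] at this
  have h1 : b / a - 1 ≤ b - a := by
    have h2 : b / a - 1 = (b - a) / a := by field_simp
    rw [h2, div_le_iff₀ ha]
    nlinarith
  linarith

lemma pinsker {σ ρ : Mat d} (hσ : σ.PosDef) (hρ : ρ.PosDef) (h1 : σ.trace = 1)
    (h2 : ρ.trace = 1) : ‖σ - ρ‖ ^ 2 ≤ qRelEnt σ ρ + qRelEnt ρ σ := by
  obtain ⟨w, hw, H⟩ := trace_cfc_mul hσ.1 hρ.1
  have e1 := H (fun x => x * Real.log x) (fun _ => 1)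
  have e2 := H (fun x => x) Real.log
  have e3 := H Real.log (fun x => x)
  have e4 := H (fun _ => 1) (fun x => x * Real.log x)
  have e5 := H (fun x => x * x) (fun _ => 1)
  have e6 := H (fun x => x) (fun x => x)
  have e7 := H (fun _ => 1) (fun x => x * x)
  rw [cfcOne ρ hρ.1, mul_one] at e1 e5
  rw [cfcOne σ hσ.1, one_mul] at e4 e7
  rw [cfcId σ hσ.1] at e2 e6
  rw [cfcId ρ hρ.1] at e3 e6
  rw [cfc_mul (fun x : ℝ => x) (fun x : ℝ => x) σ (contSpec _ _) (contSpec _ _),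
    cfcId σ hσ.1] at e5
  rw [cfc_mul (fun x : ℝ => x) (fun x : ℝ => x) ρ (contSpec _ _) (contSpec _ _),
    cfcId ρ hρ.1] at e7
  have e8 : ‖σ - ρ‖ ^ 2 = (Matrix.trace (σ * σ)).re - 2 * (Matrix.trace (σ * ρ)).re
      + (Matrix.trace (ρ * ρ)).re := by
    rw [← hsInner_self, hsInner, Matrix.conjTranspose_sub, hσ.1.eq, hρ.1.eq, Matrix.sub_mul,
      Matrix.mul_sub, Matrix.mul_sub, Matrix.trace_sub, Matrix.trace_sub, Matrix.trace_sub,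
      Matrix.trace_mul_comm ρ σ]
    simp only [Complex.sub_re]
    ring
  rw [e8, e5, e6, e7, qRelEnt, qRelEnt, Matrix.trace_mul_comm ρ, trEnt, trEnt, mlog, mlog,
    e1, e2, e3, e4]
  simp only [Finset.mul_sum, ← Finset.sum_sub_distrib, ← Finset.sum_add_distrib]
  refine Finset.sum_le_sum fun i _ => Finset.sum_le_sum fun j _ => ?_
  have ha := pos_eig hσ i
  have hb := pos_eig hρ j
  have ha1 := eig_le_one hσ h1 i
  have hb1 := eig_le_one hρ h2 j
  have hwij := hw i j
  set a := hσ.1.eigenvalues i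
  set b := hρ.1.eigenvalues j
  have key : (a - b) * (a - b) ≤ (a - b) * (Real.log a - Real.log b) := by
    rcases le_total b a with h | h
    · exact mul_le_mul_of_nonneg_left (log_sub_aux ha hb ha1 h) (by linarith)
    · have := log_sub_aux hb ha hb1 h
      nlinarith
  have := mul_le_mul_of_nonneg_left key hwij
  nlinarith

lemma mexp_posDef (A : Mat d) (hA : A.IsHermitian) (c : ℝ) (hc : 0 < c) :
    (cfc (fun x : ℝ => c * Real.exp x) A).PosDef := by
  rw [(cfc_herm _ A).posDef_iff_eigenvalues_pos]
  intro i
  have := (cfc_herm (fun x : ℝ => c * Real.exp x) A).eigenvalues_mem_spectrum_real i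
  rw [cfcSpec _ A hA] at this
  obtain ⟨x, -, hx⟩ := this
  rw [← hx]
  positivity

lemma mlog_herm (A : Mat d) : (mlog A).IsHermitian := cfc_herm _ _

lemma step_props (hd : 0 < d) (ρ G : Mat d) (hG : G.IsHermitian) (β : ℝ) :
    (egStep ρ G β).PosDef ∧ (egStep ρ G β).trace = 1 ∧
      ∃ l : ℝ, mlog (egStep ρ G β) = mlog ρ - β • G - l • (1 : Mat d) := by
  set A := mlog ρ - β • G with hAdef
  have hA : A.IsHermitian := by
    refine (mlog_herm ρ).sub ?_
    exact (IsSelfAdjoint.all β).smul (show IsSelfAdjoint G from hG)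
  have hE : (mexp A).PosDef := by
    have := mexp_posDef A hA 1 one_pos
    simpa [mexp] using this
  have : Nonempty (Fin d) := ⟨⟨0, hd⟩⟩
  have htr : 0 < (mexp A).trace := hE.trace_pos
  obtain ⟨c, hc0, hc⟩ : ∃ c : ℝ, 0 < c ∧ (mexp A).trace = (c : ℂ) := by
    rw [Complex.pos_iff] at htr
    exact ⟨(mexp A).trace.re, htr.1, Complex.ext (by simp) (by simp [← htr.2])⟩
  have hst : egStep ρ G β = cfc (fun x : ℝ => c⁻¹ * Real.exp x) A := by
    rw [egStep, ← hAdef, hc, cfc_const_mul c⁻¹ Real.exp A (contSpec _ _), ← mexp]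
    ext i j
    simp
  refine ⟨?_, ?_, Real.log c, ?_⟩
  · rw [hst]; exact mexp_posDef A hA _ (inv_pos.2 hc0)
  · rw [egStep, ← hAdef, Matrix.trace_smul, smul_eq_mul, inv_mul_cancel₀ htr.ne']
  · rw [hst, mlog, cfcComp _ _ A hA]
    have : (fun x : ℝ => Real.log (c⁻¹ * Real.exp x)) = fun x => x - Real.log c := by
      funext x
      rw [Real.log_mul (inv_pos.2 hc0).ne' (Real.exp_pos x).ne', Real.log_inv, Real.log_exp]
      ring
    rw [this, cfc_sub (fun x : ℝ => x) (fun _ => Real.log c) A (contSpec _ _) (contSpec _ _),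
      cfcId A hA, cfcConst _ A hA, Algebra.algebraMap_eq_smul_one]

/-- Three point identity. -/
lemma step_var (hd : 0 < d) (ρ G : Mat d) (hG : G.IsHermitian) (β : ℝ) :
    ∃ l : ℝ, ∀ σ : Mat d, σ.trace = 1 →
      qRelEnt σ (egStep ρ G β) = qRelEnt σ ρ + β * hsInner G σ + l := by
  obtain ⟨-, -, l, hl⟩ := step_props hd ρ G hG β
  refine ⟨l, fun σ hσ => ?_⟩
  rw [qRelEnt, qRelEnt, hl, hsInner, hG.eq, Matrix.trace_mul_comm G]
  simp [Matrix.mul_sub, Matrix.trace_sub, Matrix.trace_smul, hσ]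
  ring

lemma step_sum (hd : 0 < d) {ρ G : Mat d} (hρ : ρ.PosDef) (h1 : ρ.trace = 1)
    (hG : G.IsHermitian) (β : ℝ) :
    qRelEnt (egStep ρ G β) ρ + qRelEnt ρ (egStep ρ G β) =
      -(β * hsInner G (egStep ρ G β - ρ)) := by
  obtain ⟨l, hl⟩ := step_var hd ρ G hG β
  obtain ⟨hp, ht, -⟩ := step_props hd ρ G hG β
  have a := hl _ ht
  have b := hl _ h1
  rw [qRelEnt_self hp.1] at a
  rw [qRelEnt_self hρ.1] at b
  have : hsInner G (egStep ρ G β - ρ) = hsInner G (egStep ρ G β) - hsInner G ρ := by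
    simp [hsInner, Matrix.mul_sub, Matrix.trace_sub]
  rw [this]
  linarith

lemma step_mono (hd : 0 < d) {ρ G : Mat d}
    (hG : G.IsHermitian) {β γ : ℝ} (hβ : 0 < β) (hβγ : β ≤ γ) :
    qRelEnt (egStep ρ G β) ρ ≤ qRelEnt (egStep ρ G γ) ρ := by
  rcases hβγ.eq_or_lt with rfl | hlt
  · exact le_rfl
  obtain ⟨l, hl⟩ := step_var hd ρ G hG β
  obtain ⟨l', hl'⟩ := step_var hd ρ G hG γ
  obtain ⟨hp, ht, -⟩ := step_props hd ρ G hG β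
  obtain ⟨hp', ht', -⟩ := step_props hd ρ G hG γ
  have a := hl _ ht
  have b := hl _ ht'
  have a' := hl' _ ht
  have b' := hl' _ ht'
  rw [qRelEnt_self hp.1] at a
  rw [qRelEnt_self hp'.1] at b'
  have k := klein hp hp' ht ht'
  have k' := klein hp' hp ht' ht
  have : (γ - β) * (hsInner G (egStep ρ G γ) - hsInner G (egStep ρ G β)) ≤ 0 := by nlinarith
  have := nonpos_of_mul_nonpos_right this (by linarith)
  nlinarith

lemma step_norm (hd : 0 < d) {ρ G : Mat d} (hρ : ρ.PosDef) (h1 : ρ.trace = 1)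
    (hG : G.IsHermitian) (β : ℝ) :
    ‖egStep ρ G β - ρ‖ ^ 2 ≤ -(β * hsInner G (egStep ρ G β - ρ)) := by
  obtain ⟨hp, ht, -⟩ := step_props hd ρ G hG β
  rw [← step_sum hd hρ h1 hG β]
  exact pinsker hp hρ ht h1

lemma step_dist (hd : 0 < d) {ρ G : Mat d} (hρ : ρ.PosDef) (h1 : ρ.trace = 1)
    (hG : G.IsHermitian) {β : ℝ} (hβ : 0 < β) :
    ‖egStep ρ G β - ρ‖ ≤ β * ‖G‖ := by
  have h := step_norm hd hρ h1 hG β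
  have h2 := hsInner_le (-G) (egStep ρ G β - ρ)
  have h3 : hsInner (-G) (egStep ρ G β - ρ) = - hsInner G (egStep ρ G β - ρ) := by
    simp [hsInner]
  rw [h3, norm_neg] at h2
  have h4 := mul_le_mul_of_nonneg_left h2 hβ.le
  rcases (norm_nonneg (egStep ρ G β - ρ)).eq_or_lt with h0 | h0
  · rw [← h0]; positivity
  · refine le_of_mul_le_mul_right ?_ h0
    nlinarith

lemma grad_ineq {U : Set (Mat d)} {f : Mat d → ℝ} (hconv : ConvexOn ℝ U f)
    {x y g : Mat d} (hx : x ∈ U) (hy : y ∈ U) (hg : HasMatGradientAt f g y) :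
    f y - f x ≤ hsInner g (y - x) := by
  obtain ⟨L, hL, hLV⟩ := hg
  let ℓ : ℝ →ᵃ[ℝ] Mat d := AffineMap.lineMap x y
  have hc : ConvexOn ℝ (ℓ ⁻¹' U) (f ∘ ℓ) := hconv.comp_affineMap ℓ
  have hd : HasDerivAt (f ∘ ℓ) (L (y - x)) 1 := by
    have h1 : HasDerivAt (ℓ : ℝ → Mat d) (y - x) 1 := AffineMap.hasDerivAt_lineMap
    have h2 : HasFDerivAt f L (ℓ 1) := by simpa [ℓ] using hL
    exact h2.comp_hasDerivAt (1:ℝ) h1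
  have := hc.slope_le_of_hasDerivAt (x := 0) (y := 1) (by simpa [ℓ] using hx)
    (by simpa [ℓ] using hy) one_pos hd
  rw [slope_def_field, hLV] at this
  simpa [ℓ, hsInner] using this

end EGAux

open EGAux in
/-- along any convergent subsequence of the EG–Armijo iterates, there is a
fixed `β > 0` such that `D(ρ_{k_j}(β), ρ_{k_j}) → 0`. -/
theorem stmt_14 {d : ℕ} (hd : 0 < d) (U : Set (Mat d)) (hUopen : IsOpen U)
    (hUconv : Convex ℝ U) (hDU : {σ : Mat d | IsDensity σ} ⊆ U)
    (f : Mat d → ℝ) (f' : Mat d → Mat d)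
    (hconv : ConvexOn ℝ U f)
    (hgrad : ∀ x ∈ U, HasMatGradientAt f (f' x) x)
    (hherm : ∀ x ∈ U, (f' x).IsHermitian)
    (hlip : ∀ x ∈ U, ∃ V ∈ nhds x, V ⊆ U ∧
      ∃ L : ℝ, ∀ a ∈ V, ∀ b ∈ V, ‖f' a - f' b‖ ≤ L * ‖a - b‖)
    (α r τ : ℝ) (hα : 0 < α) (hr : r ∈ Set.Ioo (0:ℝ) 1) (hτ : τ ∈ Set.Ioo (0:ℝ) 1)
    (ρseq : ℕ → Mat d) (αseq : ℕ → ℝ)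
    (hmem : ∀ k, IsDensity (ρseq k))
    (halg : IsEGArmijo f f' α r τ ρseq αseq)
    (φ : ℕ → ℕ) (hφ : StrictMono φ)
    (ρbar : Mat d) (hbarD : IsDensity ρbar)
    (hsub : Filter.Tendsto (fun j => ρseq (φ j)) Filter.atTop (nhds ρbar)) :
    ∃ β > (0:ℝ), Filter.Tendsto
      (fun j => qRelEnt (egStep (ρseq (φ j)) (f' (ρseq (φ j))) β) (ρseq (φ j)))
      Filter.atTop (nhds 0) := by
  obtain ⟨h0, hstep, harm⟩ := halg
  obtain ⟨hr0, hr1⟩ := hr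
  obtain ⟨hτ0, hτ1⟩ := hτ
  have hU : ∀ k, ρseq k ∈ U := fun k => hDU (hmem k)
  have hG : ∀ k, (f' (ρseq k)).IsHermitian := fun k => hherm _ (hU k)
  have htr : ∀ k, (ρseq k).trace = 1 := fun k => (hmem k).2
  have hpd : ∀ k, (ρseq k).PosDef := by
    intro k
    cases k with
    | zero => exact h0
    | succ k => rw [hstep k]; exact (step_props hd _ _ (hG k) _).1
  have hdens : ∀ k β, egStep (ρseq k) (f' (ρseq k)) β ∈ U := by
    intro k β
    obtain ⟨h1, h2, -⟩ := step_props hd (ρseq k) _ (hG k) β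
    exact hDU ⟨h1.posSemidef, h2⟩
  have hαpos : ∀ k, 0 < αseq k ∧ αseq k ≤ α := by
    intro k
    obtain ⟨m, hm, -⟩ := harm k
    rw [hm]
    refine ⟨by positivity, ?_⟩
    exact mul_le_of_le_one_right hα.le (pow_le_one₀ hr0.le hr1.le)
  -- nonpositivity of the inner product along steps
  have hneg : ∀ k β, 0 < β →
      hsInner (f' (ρseq k)) (egStep (ρseq k) (f' (ρseq k)) β - ρseq k) ≤ 0 := by
    intro k β hβ
    have h1 := step_norm hd (hpd k) (htr k) (hG k) β
    by_contra! hcon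
    have := mul_pos hβ hcon
    nlinarith [sq_nonneg ‖egStep (ρseq k) (f' (ρseq k)) β - ρseq k‖]
  have hdec : ∀ k, f (ρseq (k + 1)) ≤ f (ρseq k) + τ * hsInner (f' (ρseq k))
      (ρseq (k + 1) - ρseq k) := by
    intro k
    obtain ⟨m, -, hm, -⟩ := harm k
    exact hm
  have hanti : Antitone fun k => f (ρseq k) := by
    refine antitone_nat_of_succ_le fun k => ?_
    have h1 := hdec k
    have h2 := hneg k _ (hαpos k).1
    rw [← hstep k] at h2
    have := mul_nonneg_of_nonpos_of_nonpos (a := -τ) (by linarith) h2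
    linarith
  have hbarU : ρbar ∈ U := hDU hbarD
  have hcont : ContinuousAt f ρbar := by
    obtain ⟨L, hL, -⟩ := hgrad ρbar hbarU
    exact hL.continuousAt
  have hlim : Filter.Tendsto (fun k => f (ρseq k)) Filter.atTop (nhds (f ρbar)) :=
    (tendsto_iff_tendsto_subseq_of_antitone hanti hφ.tendsto_atTop).2
      (hcont.tendsto.comp hsub)
  have hdiff : Filter.Tendsto (fun k => α / τ * (f (ρseq k) - f (ρseq (k + 1))))
      Filter.atTop (nhds 0) := by
    have h1 := (hlim.sub (hlim.comp (Filter.tendsto_add_atTop_nat 1))).const_mul (α / τ)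
    simpa using h1
  -- local constants
  obtain ⟨V, hV, -, L, hL⟩ := hlip ρbar hbarU
  obtain ⟨ε, hε, hball⟩ := Metric.mem_nhds_iff.1 hV
  obtain ⟨L', hL'0, hL'⟩ : ∃ L' : ℝ, 0 < L' ∧ ∀ a ∈ V, ∀ b ∈ V,
      ‖f' a - f' b‖ ≤ L' * ‖a - b‖ := by
    refine ⟨|L| + 1, by positivity, fun a ha b hb => (hL a ha b hb).trans ?_⟩
    exact mul_le_mul_of_nonneg_right (by linarith [le_abs_self L]) (norm_nonneg _)
  have hbarV : ρbar ∈ V := mem_of_mem_nhds hV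
  obtain ⟨M, hM⟩ : ∃ M : ℝ, M = ‖f' ρbar‖ + L' * ε + 1 := ⟨_, rfl⟩
  have hM0 : 0 < M := by rw [hM]; positivity
  obtain ⟨β₀, hβ₀⟩ : ∃ β₀ : ℝ, β₀ = min (ε / (4 * M)) ((1 - τ) / L') := ⟨_, rfl⟩
  have hβ₀0 : 0 < β₀ := by
    rw [hβ₀]
    exact lt_min (by positivity) (div_pos (by linarith) hL'0)
  have harmijo : ∀ k, ρseq k ∈ Metric.ball ρbar (ε / 2) → ∀ β, 0 < β → β ≤ β₀ →
      f (egStep (ρseq k) (f' (ρseq k)) β) ≤ f (ρseq k) +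
        τ * hsInner (f' (ρseq k)) (egStep (ρseq k) (f' (ρseq k)) β - ρseq k) := by
    intro k hk β hβ hββ₀
    rw [mem_ball_iff_norm] at hk
    have hkV : ρseq k ∈ V := hball (by rw [mem_ball_iff_norm]; linarith)
    have hGM : ‖f' (ρseq k)‖ ≤ M := by
      have h1 := hL' _ hkV _ hbarV
      have h2 : ‖f' (ρseq k)‖ ≤ ‖f' (ρseq k) - f' ρbar‖ + ‖f' ρbar‖ := by
        simpa using norm_add_le (f' (ρseq k) - f' ρbar) (f' ρbar)
      have h3 : L' * ‖ρseq k - ρbar‖ ≤ L' * ε :=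
        mul_le_mul_of_nonneg_left (by linarith) hL'0.le
      rw [hM]; linarith
    have hdist := step_dist hd (hpd k) (htr k) (hG k) hβ
    have hnorm := step_norm hd (hpd k) (htr k) (hG k) β
    have hng := hneg k β hβ
    have hσU := hdens k β
    set σ := egStep (ρseq k) (f' (ρseq k)) β with hσ
    have hd1 : ‖σ - ρseq k‖ ≤ ε / 4 := by
      refine hdist.trans ?_
      calc β * ‖f' (ρseq k)‖ ≤ (ε / (4 * M)) * M := by
            refine mul_le_mul (hββ₀.trans ?_) hGM (norm_nonneg _) (by positivity)
            rw [hβ₀]; exact min_le_left _ _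
        _ = ε / 4 := by field_simp
    have hσV : σ ∈ V := by
      refine hball ?_
      rw [mem_ball_iff_norm]
      have : ‖σ - ρbar‖ ≤ ‖σ - ρseq k‖ + ‖ρseq k - ρbar‖ := by
        simpa using norm_add_le (σ - ρseq k) (ρseq k - ρbar)
      linarith
    have hg := grad_ineq hconv (hU k) hσU (hgrad σ hσU)
    have hs : hsInner (f' σ) (σ - ρseq k) = hsInner (f' (ρseq k)) (σ - ρseq k) +
        hsInner (f' σ - f' (ρseq k)) (σ - ρseq k) := by
      simp only [hsInner, Matrix.conjTranspose_sub, Matrix.sub_mul, Matrix.trace_sub,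
        Complex.sub_re]
      ring
    have hcs := hsInner_le (f' σ - f' (ρseq k)) (σ - ρseq k)
    have hl := mul_le_mul_of_nonneg_right (hL' _ hσV _ hkV) (norm_nonneg (σ - ρseq k))
    have hLβ : L' * β ≤ 1 - τ := by
      have : β ≤ (1 - τ) / L' := hββ₀.trans (by rw [hβ₀]; exact min_le_right _ _)
      rw [le_div_iff₀ hL'0] at this
      linarith
    have h5 := mul_le_mul_of_nonneg_left hnorm hL'0.le
    have h6 := mul_le_mul_of_nonneg_right hLβ (neg_nonneg.2 hng)
    nlinarith
  have hαlow : ∀ k, ρseq k ∈ Metric.ball ρbar (ε / 2) → min α (r * β₀) ≤ αseq k := by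
    intro k hk
    obtain ⟨m, hm, -, h | h⟩ := harm k
    · refine (min_le_left _ _).trans ?_
      rw [hm, h]; simp
    · refine (min_le_right _ _).trans ?_
      by_contra! hcon
      have h1 : αseq k / r ≤ β₀ := by
        rw [div_le_iff₀ hr0]; linarith
      have := harmijo k hk _ (div_pos (hαpos k).1 hr0) h1
      linarith
  have hβ0 : 0 < min α (r * β₀) := lt_min hα (by positivity)
  refine ⟨min α (r * β₀), hβ0, ?_⟩
  refine squeeze_zero' (Filter.Eventually.of_forall fun j => ?_) ?_
    (hdiff.comp hφ.tendsto_atTop)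
  · obtain ⟨h1, h2, -⟩ := step_props hd (ρseq (φ j)) _ (hG (φ j)) (min α (r * β₀))
    exact klein h1 (hpd _) h2 (htr _)
  · filter_upwards [hsub (Metric.ball_mem_nhds ρbar (half_pos hε))] with j hj
    obtain ⟨k, hk⟩ : ∃ k, k = φ j := ⟨_, rfl⟩
    simp only [Function.comp, ← hk]
    have hj' : ρseq k ∈ Metric.ball ρbar (ε / 2) := by rw [hk]; exact hj
    refine (step_mono hd (hG k) hβ0 (hαlow k hj')).trans ?_
    have h1 := step_sum hd (hpd k) (htr k) (hG k) (αseq k)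
    obtain ⟨h2, h3, -⟩ := step_props hd (ρseq k) _ (hG k) (αseq k)
    have h4 := klein (hpd k) h2 (htr k) h3
    have h5 := hneg k _ (hαpos k).1
    have h6 := hdec k
    rw [← hstep k] at *
    have h7 : -hsInner (f' (ρseq k)) (ρseq (k + 1) - ρseq k) ≤
        (f (ρseq k) - f (ρseq (k + 1))) / τ := by
      rw [le_div_iff₀ hτ0]; linarith
    have h8 := mul_le_mul (hαpos k).2 h7 (by linarith) hα.le
    have h9 : α / τ * (f (ρseq k) - f (ρseq (k + 1))) =
      α * ((f (ρseq k) - f (ρseq (k + 1))) / τ) := by ring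
    rw [h9]
    linarith

end
end
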